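/- arXiv:1606.02612 — 2 statements merged into one kernel-verified Lean document; each statement's English description precedes it below -/
import Mathlib

section
/- Let f be near-control-affine. Then for every r ∈ (0,∞] and every x ∈ Ω∖C, the image f_aff(x, Ū_r) is contained in the convex hull co f(x, U_r) of the image of U_r under f(x,·). -/
/-!
Write `χ_α(ε) = ∏ i, ε_i ^ α_i` for a sign vector `ε ∈ {1,-1}^m`. Since every `K_i` is odd, the
functions `χ_α` with `α_j ∈ {0, K_j}` are pairwise orthogonal characters (`sum_chi_mul_chi`), and
`χ_0 = 1`. Given `R > 0`, evaluate `f(x, ·)` at the vertices `R ε` of the cube `[-R, R]^m` and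
take the average with weights `2^{-m} (1 + Σ_α θ_α χ_α(ε))`, where `θ_α = w_α / R^{|α|}`. By
orthogonality the weights have sum one and the weighted average of `f(x, R ε)` is exactly
`f_aff(x, w)`. The weights are nonnegative once `Σ_α |θ_α| ≤ 1`, which holds if
`M |w_α| ≤ R^{|α|}` for every `α` (`affField_mem_convexHull`).

It remains to choose `R`. For `r < ∞` take `R = r`: `min_{i, j ∈ {1, d̄}} r^{j K_i} ≤ r^{|α|}`
because `K_i ≤ |α|` for any `i` in the support of `α` (used when `r ≥ 1`), and
`|α| ≤ d̄ max_{i ∈ supp α} K_i` (used when `r < 1`). For `r = ∞` any large `R` works.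
-/

open Set Filter Topology MeasureTheory Metric InnerProductSpace ENNReal NNReal

noncomputable section

abbrev En (n : ℕ) : Type := EuclideanSpace ℝ (Fin n)

/-- The set of limiting gradients `D*F(x)`. -/
def limGrad {n : ℕ} (F : En n → ℝ) (x : En n) : Set (En n) :=
  { w | ∃ xk : ℕ → En n,
      (∀ k, xk k ≠ x ∧ DifferentiableAt ℝ F (xk k)) ∧
      Tendsto xk atTop (𝓝 x) ∧
      Tendsto (fun k => gradient F (xk k)) atTop (𝓝 w) }

/-- `F` is semiconcave on `Θ`. -/
def SemiconcaveOn {n : ℕ} (F : En n → ℝ) (Θ : Set (En n)) : Prop :=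
  ∃ ρ : ℝ, 0 ≤ ρ ∧ ∀ z₁ z₂ : En n, segment ℝ z₁ z₂ ⊆ Θ →
    F z₁ + F z₂ - 2 * F ((1/2 : ℝ) • (z₁ + z₂)) ≤ ρ * ‖z₁ - z₂‖ ^ 2

/-- `F` is locally semiconcave on `Θ`: semiconcave on every compact subset. -/
def LocallySemiconcaveOn {n : ℕ} (F : En n → ℝ) (Θ : Set (En n)) : Prop :=
  ∀ K : Set (En n), K ⊆ Θ → IsCompact K → SemiconcaveOn F K

/-- The Hamiltonian `H_{l,f}(x,p₀,p) := inf_{u ∈ U} (⟪p, f(x,u)⟫ + p₀ l(x,u))`, in `EReal`. -/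
def ham {n : ℕ} {𝒰 : Type*} (U : Set 𝒰) (l : En n → 𝒰 → ℝ) (f : En n → 𝒰 → En n)
    (x : En n) (p₀ : ℝ) (p : En n) : EReal :=
  ⨅ u ∈ U, ((⟪p, f x u⟫_ℝ + p₀ * l x u : ℝ) : EReal)

/-- A `p₀`-Minimum Restraint Function with the threshold `W₀` made explicit. -/
structure IsMRFWith {n : ℕ} {𝒰 : Type*} (Ω C : Set (En n)) (U : Set 𝒰)
    (l : En n → 𝒰 → ℝ) (f : En n → 𝒰 → En n) (p₀ : ℝ) (W : En n → ℝ)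
    (W₀ : EReal) : Prop where
  cont : ContinuousOn W (Ω \ interior C)
  nonneg : ∀ x ∈ Ω \ interior C, 0 ≤ W x
  locSemiconcave : LocallySemiconcaveOn W (Ω \ C)
  pos : ∀ x ∈ Ω \ C, 0 < W x
  zero_on_bdry : ∀ x ∈ frontier C, W x = 0
  proper : ∀ K : Set ℝ, IsCompact K → K ⊆ Ici (0:ℝ) → IsCompact {x ∈ Ω \ C | W x ∈ K}
  ham_neg : ∀ x ∈ Ω \ C, ∀ p ∈ limGrad W x, ham U l f x p₀ p < 0
  lt_threshold : ∀ x ∈ Ω \ C, (W x : EReal) < W₀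
  tendsto_threshold : ∀ x₀ ∈ frontier Ω, Tendsto (fun x => (W x : EReal)) (𝓝[Ω \ C] x₀) (𝓝 W₀)

/-- A `p₀`-Minimum Restraint Function for `(l,f,C)` in `Ω`. -/
def IsMRF {n : ℕ} {𝒰 : Type*} (Ω C : Set (En n)) (U : Set 𝒰)
    (l : En n → 𝒰 → ℝ) (f : En n → 𝒰 → En n) (p₀ : ℝ) (W : En n → ℝ) : Prop :=
  ∃ W₀ : EReal, 0 < W₀ ∧ IsMRFWith Ω C U l f p₀ W W₀
/-- The total degree `|α| = α₁ + ⋯ + α_m` of a multi-index. -/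
def mdeg {m : ℕ} (α : Fin m → ℕ) : ℕ := ∑ i, α i

/-- `c(α)` : the number of nonzero entries of a multi-index. -/
def csupp {m : ℕ} (α : Fin m → ℕ) : ℕ := (Finset.univ.filter fun i => α i ≠ 0).card

/-- The monomial `u^α = u₁^{α₁} ⋯ u_m^{α_m}`. -/
def monom {m : ℕ} (u : En m) (α : Fin m → ℕ) : ℝ := ∏ i, (u i) ^ (α i)

/-- The (finite) set of multi-indices with all entries `≤ d`. -/
def multiIdx (m d : ℕ) : Finset (Fin m → ℕ) := Fintype.piFinset fun _ => Finset.range (d + 1)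

/-- `f` is control-polynomial of degree `d`, with drift `f0` and coefficient fields `F α`
(vanishing unless `1 ≤ |α| ≤ d`):
`f(x,u) = f0(x) + Σ_{1 ≤ |α| ≤ d} u^α F_α(x)`. -/
def IsCtrlPoly {n m : ℕ} (d : ℕ) (f : En n → En m → En n) (f0 : En n → En n)
    (F : (Fin m → ℕ) → En n → En n) : Prop :=
  (∀ α : Fin m → ℕ, (mdeg α = 0 ∨ d < mdeg α) → ∀ x, F α x = 0) ∧
  (∀ x u, f x u = f0 x + ∑ α ∈ multiIdx m d, monom u α • F α x)

/-- The control set `U_r = [-r,r]^m` for `r ∈ (0,∞]` (`U_∞ = ℝ^m`). -/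
def Uball (m : ℕ) (r : ℝ≥0∞) : Set (En m) := {u | ∀ i, ENNReal.ofReal |u i| ≤ r}

/-- The multi-indices of a near-control-affine system: each entry `α_j ∈ {0, K_j}` and
`1 ≤ c(α) ≤ d̄`. -/
def ncaIdx (m : ℕ) (K : Fin m → ℕ) (dbar : ℕ) : Finset (Fin m → ℕ) :=
  (Fintype.piFinset fun i => ({0, K i} : Finset ℕ)).filter fun α =>
    1 ≤ csupp α ∧ csupp α ≤ dbar

/-- `f` is near-control-affine with exponents `K` (positive odd) and `d̄ ≤ m`. -/
def IsNCA {n m : ℕ} (f : En n → En m → En n) (f0 : En n → En n)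
    (F : (Fin m → ℕ) → En n → En n) (K : Fin m → ℕ) (dbar : ℕ) : Prop :=
  (∀ i, Odd (K i) ∧ 0 < K i) ∧ 1 ≤ dbar ∧ dbar ≤ m ∧
  (∀ α, α ∉ ncaIdx m K dbar → ∀ x, F α x = 0) ∧
  (∀ x u, f x u = f0 x + ∑ α ∈ ncaIdx m K dbar, monom u α • F α x)

/-- The control-affine field associated with a near-control-affine system:
`f_aff(x,w) = f0(x) + Σ_α w_α F_α(x)`. -/
def affField {n m : ℕ} (f0 : En n → En n) (F : (Fin m → ℕ) → En n → En n)
    (K : Fin m → ℕ) (dbar : ℕ) (x : En n) (w : (Fin m → ℕ) → ℝ) : En n :=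
  f0 x + ∑ α ∈ ncaIdx m K dbar, w α • F α x

/-- `r̄ := (1/M) min{ r^{j K_i} : i = 1,…,m ; j ∈ {1,d̄} }` (with `r̄ = ∞` when `r = ∞`). -/
def rbar (m : ℕ) (K : Fin m → ℕ) (dbar : ℕ) (M : ℕ) (r : ℝ≥0∞) : ℝ≥0∞ :=
  if r = ⊤ then ⊤
  else ENNReal.ofReal ((1 / (M : ℝ)) *
    sInf {y : ℝ | ∃ i : Fin m, ∃ j ∈ ({1, dbar} : Set ℕ), y = r.toReal ^ (j * K i)})

/-- The affine control set `Ū_r = [-r̄, r̄]^M`. -/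
def Ubar (m : ℕ) (K : Fin m → ℕ) (dbar : ℕ) (r : ℝ≥0∞) : Set ((Fin m → ℕ) → ℝ) :=
  {w | ∀ α ∈ ncaIdx m K dbar,
    ENNReal.ofReal |w α| ≤ rbar m K dbar (ncaIdx m K dbar).card r}

/-- The vertices `{1,-1}^m` of the unit cube. -/
def signs (m : ℕ) : Finset (Fin m → ℝ) := Fintype.piFinset fun _ => ({1, -1} : Finset ℝ)

/-- The character `χ_α(ε) = ∏ i, ε_i ^ α_i` on sign vectors. -/
def chi {m : ℕ} (α : Fin m → ℕ) (ε : Fin m → ℝ) : ℝ := ∏ i, ε i ^ α i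

lemma abs_of_mem_signs {m : ℕ} {ε : Fin m → ℝ} (h : ε ∈ signs m) (i : Fin m) : |ε i| = 1 := by
  have := Fintype.mem_piFinset.1 h i
  simp only [Finset.mem_insert, Finset.mem_singleton] at this
  rcases this with h | h <;> simp [h]

lemma abs_chi {m : ℕ} (α : Fin m → ℕ) {ε : Fin m → ℝ} (h : ε ∈ signs m) : |chi α ε| = 1 := by
  simp [chi, Finset.abs_prod, abs_pow, abs_of_mem_signs h]

lemma chi_zero {m : ℕ} (ε : Fin m → ℝ) : chi 0 ε = 1 := by simp [chi]

/-- Orthogonality of the characters `χ_α`, `α_j ∈ {0, K_j}`: the sum factors over the coordinates,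
and the `i`-th factor `1 + (-1)^(α_i + β_i)` vanishes exactly when `α_i ≠ β_i`, as `K_i` is odd. -/
lemma sum_chi_mul_chi {m : ℕ} {K : Fin m → ℕ} (hK : ∀ i, Odd (K i)) {α β : Fin m → ℕ}
    (hα : ∀ i, α i = 0 ∨ α i = K i) (hβ : ∀ i, β i = 0 ∨ β i = K i) :
    ∑ ε ∈ signs m, chi α ε * chi β ε = if α = β then (2 : ℝ) ^ m else 0 := by
  have h1 : ∑ ε ∈ signs m, chi α ε * chi β ε
      = ∏ i, ∑ s ∈ ({1, -1} : Finset ℝ), s ^ (α i + β i) := by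
    rw [Finset.prod_univ_sum]
    refine Finset.sum_congr rfl fun ε _ => ?_
    simp only [chi, ← Finset.prod_mul_distrib, pow_add]
  have h2 : ∀ k : ℕ, ∑ s ∈ ({1, -1} : Finset ℝ), s ^ k = 1 + (-1) ^ k := by
    intro k
    rw [Finset.sum_pair (by norm_num), one_pow]
  rw [h1]
  simp only [h2]
  split_ifs with h
  · subst h
    simp [← two_mul, pow_mul]
  · obtain ⟨i, hi⟩ := Function.ne_iff.1 h
    refine Finset.prod_eq_zero (Finset.mem_univ i) ?_
    have : Odd (α i + β i) := by
      rcases hα i with h1 | h1 <;> rcases hβ i with h2 | h2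
      · exact absurd (h1.trans h2.symm) hi
      · simpa [h1, h2] using hK i
      · simpa [h1, h2] using hK i
      · exact absurd (h1.trans h2.symm) hi
    rw [this.neg_one_pow]
    norm_num

lemma mem_ncaIdx {m : ℕ} {K : Fin m → ℕ} {dbar : ℕ} {α : Fin m → ℕ} :
    α ∈ ncaIdx m K dbar ↔ (∀ i, α i = 0 ∨ α i = K i) ∧ 1 ≤ csupp α ∧ csupp α ≤ dbar := by
  simp [ncaIdx, Fintype.mem_piFinset]

lemma monom_smul_sign {m : ℕ} (R : ℝ) (ε : Fin m → ℝ) (α : Fin m → ℕ) :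
    monom (WithLp.toLp 2 (fun i => R * ε i)) α = R ^ mdeg α * chi α ε := by
  simp [monom, chi, mdeg, mul_pow, Finset.prod_mul_distrib, Finset.prod_pow_eq_pow_sum]

/-- The averaging argument over the vertices of `[-R, R]^m`. -/
lemma affField_mem_convexHull {n m : ℕ} {f : En n → En m → En n} {f0 : En n → En n}
    {F : (Fin m → ℕ) → En n → En n} {K : Fin m → ℕ} {dbar : ℕ}
    (hNCA : IsNCA f f0 F K dbar) {r : ℝ≥0∞} {R : ℝ} (hR : 0 < R) (hRr : ENNReal.ofReal R ≤ r)
    (x : En n) {w : (Fin m → ℕ) → ℝ}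
    (hw : ∀ α ∈ ncaIdx m K dbar, ((ncaIdx m K dbar).card : ℝ) * |w α| ≤ R ^ mdeg α) :
    affField f0 F K dbar x w ∈ convexHull ℝ ((fun u => f x u) '' Uball m r) := by
  obtain ⟨hK, -, -, -, hf⟩ := hNCA
  have hKo : ∀ i, Odd (K i) := fun i => (hK i).1
  set I := ncaIdx m K dbar with hI
  set θ : (Fin m → ℕ) → ℝ := fun α => w α / R ^ mdeg α with hθ
  set a : (Fin m → ℝ) → ℝ := fun ε => (1 + ∑ α ∈ I, θ α * chi α ε) / 2 ^ m with ha
  have hθsum : ∑ α ∈ I, |θ α| ≤ 1 := by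
    rcases Nat.eq_zero_or_pos I.card with h0 | hpos
    · simp [Finset.card_eq_zero.1 h0]
    have hM : (0 : ℝ) < I.card := by exact_mod_cast hpos
    calc ∑ α ∈ I, |θ α| ≤ ∑ _α ∈ I, (1 / (I.card : ℝ)) := by
          refine Finset.sum_le_sum fun α hα => ?_
          have hp : 0 < R ^ mdeg α := by positivity
          rw [hθ, abs_div, abs_of_pos hp, div_le_div_iff₀ hp hM]
          linarith [hw α hα]
      _ = 1 := by
          rw [Finset.sum_const, nsmul_eq_mul]
          field_simp
  have ha0 : ∀ ε ∈ signs m, 0 ≤ a ε := by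
    intro ε hε
    have h1 : |∑ α ∈ I, θ α * chi α ε| ≤ 1 := by
      refine (Finset.abs_sum_le_sum_abs _ _).trans (le_trans (le_of_eq ?_) hθsum)
      exact Finset.sum_congr rfl fun α _ => by rw [abs_mul, abs_chi α hε, mul_one]
    have := (abs_le.1 h1).1
    exact div_nonneg (by linarith) (by positivity)
  -- The Fourier coefficients of the weight: `1` at the trivial character and `θ β` at `χ_β`.
  have hcoef : ∀ β : Fin m → ℕ, (∀ i, β i = 0 ∨ β i = K i) →
      ∑ ε ∈ signs m, a ε * chi β ε = (if 0 = β then 1 else 0) + if β ∈ I then θ β else 0 := by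
    intro β hβ
    have e1 : ∀ ε, a ε * chi β ε
        = (chi 0 ε * chi β ε + ∑ α ∈ I, θ α * (chi α ε * chi β ε)) / 2 ^ m := by
      intro ε
      simp only [ha, chi_zero, div_mul_eq_mul_div, add_mul, Finset.sum_mul, mul_assoc]
    have e2 : ∑ α ∈ I, ∑ ε ∈ signs m, θ α * (chi α ε * chi β ε)
        = ∑ α ∈ I, if α = β then θ α * 2 ^ m else 0 := by
      refine Finset.sum_congr rfl fun α hα => ?_
      rw [← Finset.mul_sum, sum_chi_mul_chi hKo (mem_ncaIdx.1 hα).1 hβ, mul_ite, mul_zero]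
    simp only [e1]
    rw [← Finset.sum_div, Finset.sum_add_distrib, sum_chi_mul_chi (α := 0) hKo (fun _ => Or.inl rfl) hβ,
      Finset.sum_comm, e2, Finset.sum_ite_eq']
    split_ifs <;> field_simp <;> simp [mul_comm]
  have h0I : (0 : Fin m → ℕ) ∉ I := fun h => by
    have := (mem_ncaIdx.1 h).2.1
    simp [csupp] at this
  have hsum1 : ∑ ε ∈ signs m, a ε = 1 := by
    have := hcoef 0 fun _ => Or.inl rfl
    simpa [chi_zero, h0I] using this
  have hmem := (convex_convexHull ℝ ((fun u => f x u) '' Uball m r)).sum_mem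
    (t := signs m) (w := a) (z := fun ε => f x (WithLp.toLp 2 (fun i => R * ε i))) ha0 hsum1
    (fun ε hε => subset_convexHull ℝ _ ⟨_, fun i => by
      simpa [abs_mul, abs_of_mem_signs hε i, abs_of_pos hR] using hRr, rfl⟩)
  convert hmem using 1
  simp only [hf, monom_smul_sign, smul_add, Finset.sum_add_distrib, ← Finset.sum_smul, hsum1,
    one_smul, Finset.smul_sum, affField]
  rw [Finset.sum_comm]
  congr 1
  refine Finset.sum_congr rfl fun β hβ => ?_
  have hne : (0 : Fin m → ℕ) ≠ β := fun h => h0I (h ▸ hβ)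
  have := hcoef β (mem_ncaIdx.1 hβ).1
  rw [if_neg hne, if_pos hβ, zero_add] at this
  simp only [smul_smul, ← Finset.sum_smul]
  congr 1
  calc w β = R ^ mdeg β * θ β := by
        rw [hθ]
        field_simp
    _ = _ := by
        rw [← this, Finset.mul_sum]
        exact Finset.sum_congr rfl fun ε _ => by ring

lemma exists_le_mdeg {m : ℕ} {K : Fin m → ℕ} {dbar : ℕ} {α : Fin m → ℕ}
    (hα : α ∈ ncaIdx m K dbar) : ∃ i, K i ≤ mdeg α ∧ mdeg α ≤ dbar * K i := by
  obtain ⟨h1, h2, h3⟩ := mem_ncaIdx.1 hα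
  -- The index `i` maximizes `α`, that is `K`, over the support of `α`.
  obtain ⟨i, hi, hmax⟩ := Finset.exists_max_image (Finset.univ.filter fun i => α i ≠ 0) α
    (Finset.card_pos.1 h2)
  have hiK : α i = K i := (h1 i).resolve_left (Finset.mem_filter.1 hi).2
  refine ⟨i, ?_, ?_⟩
  · rw [← hiK]
    exact Finset.single_le_sum (f := α) (fun _ _ => Nat.zero_le _) (Finset.mem_univ i)
  · calc mdeg α = ∑ j ∈ Finset.univ.filter fun i => α i ≠ 0, α j := by
          rw [mdeg, Finset.sum_filter_ne_zero]
      _ ≤ csupp α * α i := by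
          rw [← smul_eq_mul]
          exact Finset.sum_le_card_nsmul _ _ _ hmax
      _ ≤ dbar * K i := by
          rw [hiK]
          exact Nat.mul_le_mul_right _ h3

/-- For a near-control-affine system, the image of `Ū_r` under
`f_aff(x,·)` is contained in the convex hull of the image of `U_r` under `f(x,·)`,
for every `r ∈ (0,∞]` and every `x ∈ Ω \ C`. -/
theorem nca_affine_in_convex_hull {n m : ℕ} (hn : 1 ≤ n) (hm : 1 ≤ m)
    (Ω C : Set (En n)) (hΩ : IsOpen Ω) (hC : IsClosed C) (hCΩ : C ⊆ Ω)
    (f : En n → En m → En n) (f0 : En n → En n) (F : (Fin m → ℕ) → En n → En n)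
    (K : Fin m → ℕ) (dbar : ℕ)
    (hf0 : ContinuousOn f0 (Ω \ C)) (hF : ∀ α, ContinuousOn (F α) (Ω \ C))
    (hNCA : IsNCA f f0 F K dbar)
    (r : ℝ≥0∞) (hr : 0 < r) :
    ∀ x ∈ Ω \ C,
      (fun w => affField f0 F K dbar x w) '' Ubar m K dbar r ⊆
        convexHull ℝ ((fun u => f x u) '' Uball m r) := by
  rintro x - _ ⟨w, hw, rfl⟩
  have hKpos : ∀ i, 0 < K i := fun i => (hNCA.1 i).2
  by_cases hr' : r = ⊤
  · set M : ℝ := ((ncaIdx m K dbar).card : ℝ)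
    have hM : 0 ≤ M := Nat.cast_nonneg _
    set R : ℝ := 1 + ∑ α ∈ ncaIdx m K dbar, M * |w α| with hRdef
    have hnn : ∀ α ∈ ncaIdx m K dbar, 0 ≤ M * |w α| := fun α _ => by positivity
    have hR1 : 1 ≤ R := by linarith [Finset.sum_nonneg hnn]
    refine affField_mem_convexHull hNCA (R := R) (by linarith) (by simp [hr']) x fun α hα => ?_
    obtain ⟨i, hi, -⟩ := exists_le_mdeg hα
    have h1 := Finset.single_le_sum hnn hα
    have h2 : R ≤ R ^ mdeg α := le_self_pow₀ hR1 (by have := hKpos i; omega)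
    linarith
  · have hR : 0 < r.toReal := ENNReal.toReal_pos hr.ne' hr'
    refine affField_mem_convexHull hNCA hR (ENNReal.ofReal_toReal hr').le x fun α hα => ?_
    obtain ⟨i, hi1, hi2⟩ := exists_le_mdeg hα
    have hMpos : (0 : ℝ) < (ncaIdx m K dbar).card := by
      exact_mod_cast Finset.card_pos.2 ⟨α, hα⟩
    set S := {y : ℝ | ∃ i : Fin m, ∃ j ∈ ({1, dbar} : Set ℕ), y = r.toReal ^ (j * K i)}
    have hSnn : ∀ y ∈ S, 0 ≤ y := by
      rintro y ⟨i, j, -, rfl⟩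
      positivity
    have hbdd : BddBelow S := ⟨0, hSnn⟩
    have hle : sInf S ≤ r.toReal ^ mdeg α := by
      rcases le_total 1 r.toReal with h | h
      · exact (csInf_le hbdd ⟨i, 1, by simp, rfl⟩).trans
          (pow_le_pow_right₀ h (by simpa using hi1))
      · exact (csInf_le hbdd ⟨i, dbar, by simp, rfl⟩).trans
          (pow_le_pow_of_le_one hR.le h hi2)
    have hwα := hw α hα
    rw [rbar, if_neg hr', ENNReal.ofReal_le_ofReal_iff
      (mul_nonneg (by positivity) (Real.sInf_nonneg hSnn)), one_div,
      le_inv_mul_iff₀ hMpos] at hwα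
    exact hwα.trans hle
end
end

section
/- Let f be near-control-affine with K = (1,…,1), so that d̄ = m =: d (every non-drift term of f has a multi-index α with α_j ∈ {0,1} for all j). For 0 < r < ∞ and an integer k ≥ 1 set I_{r,k} := [−r^k, r^k], and set I_{∞,k} := ℝ. Then for every integer k with 1 ≤ k ≤ d, every choice of indices 1 ≤ i₁ < ⋯ < i_k ≤ d, every w ∈ I_{r,k} and every x ∈ Ω∖C, the vector f₀(x) + w·f_α(x) belongs to the convex hull co f(x, U_r), where α is the multi-index with α_j = 1 for j ∈ {i₁,…,i_k} and α_j = 0 otherwise. -/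
/-!
The vector `f0 x + w • F_α x`, with `α` the indicator of `S`, is an explicit convex combination of
values of `f x` at vertices of a cube. Write `w = σ s ^ k` with `σ = ±1` and `0 ≤ s ≤ r`, and for
each sign pattern `ε ∈ {±1}^m` let `u_ε` be `s ε_i` for `i ∈ S` and `0` elsewhere. Give `u_ε`
the weight `(1 + σ ∏_{i ∈ S} ε_i) / 2 ^ m`, which is nonnegative. By orthogonality of the characters
`ε ↦ ∏_{i ∈ T} ε_i`, the weights sum to `1`, and the weighted average of a nonconstant squarefree
monomial `u^β` is `σ s ^ k` if `β = α` and `0` otherwise. Each average is computed by factoring a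
sum over sign patterns into a product over coordinates (`sum_pattern_prod`).
-/

open Set Filter Topology MeasureTheory Metric InnerProductSpace ENNReal NNReal

noncomputable section

/-- The sign `±1` encoded by a Boolean; sign patterns are functions `Fin m → Bool`. -/
def sgnB (b : Bool) : ℝ := if b then 1 else -1

/-- The `i`-th factor of the character `ε ↦ ∏_{i ∈ S} ε_i`. -/
def chiF {m : ℕ} (S : Finset (Fin m)) (i : Fin m) (b : Bool) : ℝ := if i ∈ S then sgnB b else 1

/-- The `i`-th coordinate `s ε_i` (`i ∈ S`) or `0` (`i ∉ S`) of the control `u_ε`. -/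
def ctrlF {m : ℕ} (S : Finset (Fin m)) (s : ℝ) (i : Fin m) (b : Bool) : ℝ :=
  if i ∈ S then s * sgnB b else 0

/-- The weight of the sign pattern `p` in the convex combination. -/
def wtP {m : ℕ} (S : Finset (Fin m)) (σ : ℝ) (p : Fin m → Bool) : ℝ :=
  (1 + σ * ∏ i, chiF S i (p i)) / 2 ^ m

lemma sum_pattern_prod {m : ℕ} (g : Fin m → Bool → ℝ) :
    ∑ p : Fin m → Bool, ∏ i, g i (p i) = ∏ i, (g i true + g i false) := by
  have h := Finset.prod_univ_sum (fun _ : Fin m => (Finset.univ : Finset Bool)) g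
  rw [Fintype.piFinset_univ] at h
  rw [← h]
  simp

lemma wtP_nonneg {m : ℕ} (S : Finset (Fin m)) {σ : ℝ} (hσ : |σ| = 1) (p : Fin m → Bool) :
    0 ≤ wtP S σ p := by
  have h : |σ * ∏ i, chiF S i (p i)| = 1 := by
    rw [abs_mul, hσ, Finset.abs_prod, one_mul]
    refine Finset.prod_eq_one fun i _ => ?_
    unfold chiF sgnB
    split_ifs <;> simp
  have := neg_abs_le (σ * ∏ i, chiF S i (p i))
  unfold wtP
  apply div_nonneg _ (by positivity)
  linarith

lemma sum_wtP_mul {m : ℕ} (S : Finset (Fin m)) (σ : ℝ) (g : Fin m → Bool → ℝ) :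
    ∑ p : Fin m → Bool, wtP S σ p * ∏ i, g i (p i) =
      (∏ i, (g i true + g i false) +
        σ * ∏ i, (chiF S i true * g i true + chiF S i false * g i false)) / 2 ^ m := by
  rw [← sum_pattern_prod g, ← sum_pattern_prod (fun i b => chiF S i b * g i b), Finset.mul_sum,
    ← Finset.sum_add_distrib, Finset.sum_div]
  refine Finset.sum_congr rfl fun p _ => ?_
  rw [Finset.prod_mul_distrib, wtP]
  ring

lemma sum_wtP {m : ℕ} (S : Finset (Fin m)) (hS : S.Nonempty) (σ : ℝ) :
    ∑ p : Fin m → Bool, wtP S σ p = 1 := by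
  obtain ⟨i, hi⟩ := hS
  have h := sum_wtP_mul S σ (fun _ _ => 1)
  have h0 : ∏ i, (chiF S i true * 1 + chiF S i false * 1) = 0 :=
    Finset.prod_eq_zero (Finset.mem_univ i) (by simp [chiF, sgnB, hi])
  rw [h0] at h
  norm_num at h
  exact h

/-- The weighted average of a nonconstant squarefree monomial over the controls `u_ε`. -/
lemma sum_wtP_monom {m : ℕ} (S : Finset (Fin m)) (σ s : ℝ) (α : Fin m → ℕ)
    (hα : α ∈ ncaIdx m (fun _ => 1) m) :
    ∑ p : Fin m → Bool, wtP S σ p * ∏ i, ctrlF S s i (p i) ^ α i =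
      if α = (fun j => if j ∈ S then 1 else 0) then σ * s ^ S.card else 0 := by
  rw [sum_wtP_mul S σ (fun i b => ctrlF S s i b ^ α i)]
  simp only [ncaIdx, Finset.mem_filter, Fintype.mem_piFinset, Finset.mem_insert,
    Finset.mem_singleton] at hα
  obtain ⟨h01, hc, -⟩ := hα
  obtain ⟨j, hj⟩ := Finset.card_pos.mp (show 0 < csupp α from hc)
  have hj1 : α j = 1 := (h01 j).resolve_left (by simpa using hj)
  rw [Finset.prod_eq_zero (Finset.mem_univ j)
    (by rw [hj1]; unfold ctrlF sgnB; split_ifs <;> simp_all), zero_add]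
  split_ifs with h
  · have h2 : ∀ i, chiF S i true * ctrlF S s i true ^ α i + chiF S i false * ctrlF S s i false ^ α i
        = 2 * (if i ∈ S then s else 1) := by
      intro i
      by_cases hi : i ∈ S <;> simp [h, chiF, ctrlF, sgnB, hi] <;> ring
    rw [Finset.prod_congr rfl fun i _ => h2 i, Finset.prod_mul_distrib, Finset.prod_ite_mem]
    simp only [Finset.prod_const, Finset.card_univ, Fintype.card_fin, Finset.univ_inter]
    field_simp
  · obtain ⟨i, hi⟩ := Function.ne_iff.mp h
    rw [Finset.prod_eq_zero (Finset.mem_univ i), mul_zero, zero_div]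
    by_cases hiS : i ∈ S <;> rcases h01 i with h' | h' <;>
      simp_all [chiF, ctrlF, sgnB]

/-- For a near-control-affine system with `K = (1,…,1)` and `d̄ = m = d`,
for every `1 ≤ k ≤ d`, indices `i₁ < ⋯ < i_k` (a subset `S ⊆ {1,…,m}` of cardinality `k`),
every `w ∈ I_{r,k} = [-r^k, r^k]` (all of `ℝ` if `r = ∞`) and every `x ∈ Ω \ C`, the vector
`f0(x) + w F_α(x)` lies in `co f(x,U_r)`, where `α` is the indicator multi-index of `S`. -/
theorem nca_single_term_in_convex_hull {n m : ℕ} (hn : 1 ≤ n) (hm : 1 ≤ m)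
    (Ω C : Set (En n)) (hΩ : IsOpen Ω) (hC : IsClosed C) (hCΩ : C ⊆ Ω)
    (f : En n → En m → En n) (f0 : En n → En n) (F : (Fin m → ℕ) → En n → En n)
    (hf0 : ContinuousOn f0 (Ω \ C)) (hF : ∀ α, ContinuousOn (F α) (Ω \ C))
    (hNCA : IsNCA f f0 F (fun _ => 1) m)
    (r : ℝ≥0∞) (hr : 0 < r)
    (k : ℕ) (hk : 1 ≤ k) (hkm : k ≤ m)
    (S : Finset (Fin m)) (hS : S.card = k)
    (w : ℝ) (hw : ENNReal.ofReal |w| ≤ r ^ k) :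
    ∀ x ∈ Ω \ C,
      f0 x + w • F (fun j => if j ∈ S then 1 else 0) x ∈
        convexHull ℝ ((fun u => f x u) '' Uball m r) := by
  intro x _
  obtain ⟨-, -, -, -, hf⟩ := hNCA
  have hk0 : k ≠ 0 := by omega
  have hSne : S.Nonempty := Finset.card_pos.mp (by omega)
  obtain ⟨σ, hσ, hσw⟩ : ∃ σ : ℝ, |σ| = 1 ∧ σ * |w| = w := by
    rcases le_total 0 w with h | h
    · exact ⟨1, by simp, by simp [abs_of_nonneg h]⟩
    · exact ⟨-1, by simp, by simp [abs_of_nonpos h]⟩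
  obtain ⟨s, hs0, hs⟩ : ∃ s : ℝ, 0 ≤ s ∧ s ^ k = |w| :=
    ⟨|w| ^ ((k : ℝ)⁻¹), by positivity, Real.rpow_inv_natCast_pow (abs_nonneg w) hk0⟩
  have hsr : ENNReal.ofReal s ≤ r := by
    rw [← hs, ENNReal.ofReal_pow hs0] at hw
    exact (ENNReal.pow_le_pow_left_iff hk0).mp hw
  let u : (Fin m → Bool) → En m := fun p => WithLp.toLp 2 fun i => ctrlF S s i (p i)
  have hu : ∀ p, u p ∈ Uball m r := by
    intro p i
    refine le_trans (ENNReal.ofReal_le_ofReal ?_) hsr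
    change |ctrlF S s i (p i)| ≤ s
    unfold ctrlF sgnB
    split_ifs <;> simp [abs_of_nonneg hs0, hs0]
  have hmem : (fun j : Fin m => if j ∈ S then (1 : ℕ) else 0) ∈ ncaIdx m (fun _ => 1) m := by
    refine Finset.mem_filter.mpr ⟨Fintype.mem_piFinset.mpr fun i => by split_ifs <;> simp, ?_⟩
    have hc : csupp (fun j : Fin m => if j ∈ S then (1 : ℕ) else 0) = k := by
      simp [csupp, hS]
    rw [hc]
    exact ⟨hk, hkm⟩
  have key : f0 x + w • F (fun j => if j ∈ S then 1 else 0) x =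
      ∑ p : Fin m → Bool, wtP S σ p • f x (u p) := by
    have hmon : ∀ p α, monom (u p) α = ∏ i, ctrlF S s i (p i) ^ α i := fun _ _ => rfl
    simp only [hf, smul_add, Finset.sum_add_distrib, ← Finset.sum_smul, sum_wtP S hSne, one_smul,
      Finset.smul_sum, smul_smul, hmon]
    rw [Finset.sum_comm]
    simp only [← Finset.sum_smul]
    rw [Finset.sum_congr rfl fun α hα => by rw [sum_wtP_monom S σ s α hα]]
    simp only [ite_smul, zero_smul, Finset.sum_ite_eq', hmem, if_true, hS, hs, hσw]
  rw [key]
  exact (convex_convexHull ℝ _).sum_mem (fun p _ => wtP_nonneg S hσ p) (sum_wtP S hSne σ)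
    fun p _ => subset_convexHull ℝ _ ⟨u p, hu p, rfl⟩
end
end
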